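/- arXiv:1910.00826 — 3 statements merged into one kernel-verified Lean document; each statement's English description precedes it below -/
import Mathlib

section
/- A word w is rich if and only if every suffix p of w has a palindromic prefix occurring exactly once in p. -/
def Rich {A : Type*} (w : List A) : Prop :=
  {p : List A | p.reverse = p ∧ p <:+: w}.ncard = w.length + 1
def occ {A : Type*} [DecidableEq A] (u v : List A) : ℕ :=
  ((List.range (u.length + 1)).filter (fun i => v.isPrefixOf (u.drop i))).length

/-- The palindromic factors of a word. -/
def palFactors {A : Type*} (w : List A) : Set (List A) :=
  {p | p.reverse = p ∧ p <:+: w}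

/-- The palindromic prefixes of `a :: w` which do not occur in `w`. -/
def newPals {A : Type*} (a : A) (w : List A) : Set (List A) :=
  {s | s.reverse = s ∧ s <+: a :: w ∧ ¬ s <:+: w}

theorem palFactors_cons {A : Type*} (a : A) (w : List A) :
    palFactors (a :: w) = palFactors w ∪ newPals a w := by
  ext s
  simp only [palFactors, newPals, Set.mem_union, Set.mem_ofPred_eq, List.infix_cons_iff]
  tauto

theorem disjoint_palFactors_newPals {A : Type*} (a : A) (w : List A) :
    Disjoint (palFactors w) (newPals a w) :=
  Set.disjoint_left.2 fun _ h h' => h'.2.2 h.2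

/-- A shorter palindromic prefix of a palindromic prefix of `a :: w` reoccurs in `w`. -/
theorem infix_of_prefix_palindrome {A : Type*} {a : A} {w s t : List A}
    (hs : s.reverse = s) (ht : t.reverse = t) (hst : s <+: t) (hne : s ≠ t)
    (htw : t <+: a :: w) : s <:+: w := by
  have hsuf : s <:+ t := by
    rw [← hs, ← ht]
    exact List.reverse_suffix.2 hst
  obtain ⟨x, rfl⟩ := hsuf
  cases x with
  | nil => exact absurd rfl hne
  | cons b x =>
    obtain ⟨y, hy⟩ := htw
    simp only [List.cons_append, List.cons.injEq] at hy
    exact ⟨x, y, hy.2⟩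

theorem newPals_subsingleton {A : Type*} (a : A) (w : List A) :
    (newPals a w).Subsingleton := by
  rintro s ⟨hs, hsp, hsn⟩ t ⟨ht, htp, htn⟩
  by_contra hne
  rcases List.prefix_or_prefix_of_prefix hsp htp with h | h
  · exact hsn (infix_of_prefix_palindrome hs ht h hne htp)
  · exact htn (infix_of_prefix_palindrome ht hs h (Ne.symm hne) hsp)

theorem palFactors_nil {A : Type*} : palFactors ([] : List A) = {[]} := by
  ext s
  simp +contextual [palFactors]

theorem palFactors_finite {A : Type*} (w : List A) : (palFactors w).Finite := by
  induction w with
  | nil => simp [palFactors_nil]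
  | cons a w ih =>
    rw [palFactors_cons]
    exact ih.union (newPals_subsingleton a w).finite

theorem ncard_palFactors_cons {A : Type*} (a : A) (w : List A) :
    (palFactors (a :: w)).ncard = (palFactors w).ncard + (newPals a w).ncard := by
  rw [palFactors_cons, Set.ncard_union_eq (disjoint_palFactors_newPals a w)
    (palFactors_finite w) (newPals_subsingleton a w).finite]

theorem ncard_newPals_le_one {A : Type*} (a : A) (w : List A) : (newPals a w).ncard ≤ 1 :=
  (Set.ncard_le_one (newPals_subsingleton a w).finite).2
    fun _ hs _ ht => newPals_subsingleton a w hs ht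

theorem ncard_palFactors_le {A : Type*} (w : List A) :
    (palFactors w).ncard ≤ w.length + 1 := by
  induction w with
  | nil => simp [palFactors_nil]
  | cons a w ih =>
    have := ncard_newPals_le_one a w
    rw [ncard_palFactors_cons, List.length_cons]
    omega

theorem rich_nil {A : Type*} : Rich ([] : List A) := by
  change (palFactors ([] : List A)).ncard = _
  simp [palFactors_nil]

theorem rich_cons {A : Type*} (a : A) (w : List A) :
    Rich (a :: w) ↔ (newPals a w).Nonempty ∧ Rich w := by
  change (palFactors (a :: w)).ncard = _ ↔ _ ∧ (palFactors w).ncard = _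
  rw [← Set.ncard_pos (newPals_subsingleton a w).finite, ncard_palFactors_cons,
    List.length_cons]
  have := ncard_newPals_le_one a w
  have := ncard_palFactors_le w
  omega

theorem occ_cons {A : Type*} [DecidableEq A] (a : A) (w s : List A) :
    occ (a :: w) s = (if s <+: a :: w then 1 else 0) + occ w s := by
  unfold occ
  rw [List.length_cons, List.range_succ_eq_map, List.filter_cons, List.filter_map,
    List.drop_zero]
  simp only [List.isPrefixOf_iff_prefix]
  split_ifs <;> simp [Function.comp_def, add_comm]

theorem occ_eq_zero_iff {A : Type*} [DecidableEq A] (w s : List A) :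
    occ w s = 0 ↔ ¬ s <:+: w := by
  induction w with
  | nil => cases s <;> simp [occ]
  | cons a w ih =>
    rw [occ_cons, List.infix_cons_iff, Nat.add_eq_zero_iff, ih]
    split_ifs <;> simp [*]

theorem occ_cons_eq_one_iff {A : Type*} [DecidableEq A] {a : A} {w s : List A}
    (h : s <+: a :: w) : occ (a :: w) s = 1 ↔ ¬ s <:+: w := by
  rw [occ_cons, if_pos h, ← occ_eq_zero_iff]
  omega

theorem newPals_nonempty_iff {A : Type*} [DecidableEq A] (a : A) (w : List A) :
    (newPals a w).Nonempty ↔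
      ∃ s : List A, s <+: a :: w ∧ s.reverse = s ∧ occ (a :: w) s = 1 :=
  ⟨fun ⟨s, hs, hp, hn⟩ => ⟨s, hp, hs, (occ_cons_eq_one_iff hp).2 hn⟩,
    fun ⟨s, hp, hs, ho⟩ => ⟨s, hs, hp, (occ_cons_eq_one_iff hp).1 ho⟩⟩

theorem stmt4 {A : Type*} [DecidableEq A] (w : List A) :
    Rich w ↔ ∀ p : List A, p <:+ w →
      ∃ s : List A, s <+: p ∧ s.reverse = s ∧ occ p s = 1 := by
  induction w with
  | nil =>
    refine iff_of_true rich_nil fun p hp => ⟨[], List.nil_prefix, rfl, ?_⟩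
    rw [List.suffix_nil.1 hp]
    simp [occ]
  | cons a w ih =>
    simp only [rich_cons, newPals_nonempty_iff, ih, List.suffix_cons_iff, or_imp,
      forall_and, forall_eq]
end

section
/- If w is a nonempty rich word and x is the letter such that x·lpps(w) is a suffix of w, where lpps(w) is the longest proper palindromic suffix of w, then wx is rich. -/
theorem finite_palindromic_infixes {A : Type*} (w : List A) :
    {p : List A | p.reverse = p ∧ p <:+: w}.Finite :=
  (List.finite_toSet w.sublists).subset fun _ hp => List.mem_sublists.2 hp.2.sublist

/-- A palindromic suffix shorter than another palindromic suffix of `w ++ [x]` occurs in `w`. -/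
theorem infix_of_palindromic_suffix_of_length_lt {A : Type*} {w q r : List A} {x : A}
    (hq : q.reverse = q) (hr : r.reverse = r) (hqw : q <:+ w ++ [x]) (hrw : r <:+ w ++ [x])
    (hlt : r.length < q.length) : r <:+: w := by
  have hrq : r <:+ q := List.suffix_of_suffix_length_le hrw hqw hlt.le
  have hpre : r <+: q := by
    rw [← List.reverse_suffix, hq, hr]
    exact hrq
  obtain ⟨t, rfl⟩ := hpre
  obtain ⟨s, hs⟩ := hqw
  rcases List.eq_nil_or_concat' t with rfl | ⟨t', y, rfl⟩
  · simp at hlt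
  · have h : (s ++ r ++ t') ++ [y] = w ++ [x] := by simpa using hs
    exact ⟨s, t', (List.append_inj' h rfl).1⟩

theorem exists_longest_palindromic_suffix {A : Type*} (w : List A) :
    ∃ q : List A, q.reverse = q ∧ q <:+ w ∧
      ∀ r : List A, r.reverse = r → r <:+ w → r.length ≤ q.length := by
  have hfin : {p : List A | p.reverse = p ∧ p <:+ w}.Finite :=
    (finite_palindromic_infixes w).subset fun _ hp => ⟨hp.1, hp.2.isInfix⟩
  obtain ⟨q, hq, hmax⟩ :=
    Set.exists_max_image _ List.length hfin ⟨[], rfl, List.nil_suffix⟩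
  exact ⟨q, hq.1, hq.2, fun r hr hrw => hmax r ⟨hr, hrw⟩⟩

theorem palindromic_infixes_concat_subset {A : Type*} {w q : List A} {x : A}
    (hq : q.reverse = q) (hqw : q <:+ w ++ [x])
    (hmax : ∀ r : List A, r.reverse = r → r <:+ w ++ [x] → r.length ≤ q.length) :
    {p : List A | p.reverse = p ∧ p <:+: w ++ [x]} ⊆
      insert q {p : List A | p.reverse = p ∧ p <:+: w} := by
  rintro r ⟨hr, hrw⟩
  rcases List.infix_concat_iff.1 hrw with h | h
  · rcases (hmax r hr h).lt_or_eq with hlt | heq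
    · exact Or.inr ⟨hr, infix_of_palindromic_suffix_of_length_lt hq hr hqw h hlt⟩
    · exact Or.inl ((List.suffix_of_suffix_length_le h hqw heq.le).eq_of_length heq)
  · exact Or.inr ⟨hr, h⟩

theorem ncard_palindromic_infixes_concat_le {A : Type*} (w : List A) (x : A) :
    {p : List A | p.reverse = p ∧ p <:+: w ++ [x]}.ncard ≤
      {p : List A | p.reverse = p ∧ p <:+: w}.ncard + 1 := by
  obtain ⟨q, hq, hqw, hmax⟩ := exists_longest_palindromic_suffix (w ++ [x])
  exact (Set.ncard_le_ncard (palindromic_infixes_concat_subset hq hqw hmax)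
    ((finite_palindromic_infixes w).insert q)).trans (Set.ncard_insert_le _ _)

theorem ncard_palindromic_infixes_le {A : Type*} (w : List A) :
    {p : List A | p.reverse = p ∧ p <:+: w}.ncard ≤ w.length + 1 := by
  induction w using List.reverseRecOn with
  | nil =>
    have h : {p : List A | p.reverse = p ∧ p <:+: []} ⊆ {[]} := fun p hp => by
      simpa using hp.2
    simpa using Set.ncard_le_ncard h
  | append_singleton w x ih =>
    have := ncard_palindromic_infixes_concat_le w x
    simp only [List.length_append, List.length_singleton]
    omega

theorem Rich.of_concat {A : Type*} {w : List A} {x : A} (h : Rich (w ++ [x])) : Rich w := by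
  have h₁ := ncard_palindromic_infixes_concat_le w x
  have h₂ := ncard_palindromic_infixes_le w
  unfold Rich at h ⊢
  simp only [List.length_append, List.length_singleton] at h
  omega

theorem Rich.reverse {A : Type*} {w : List A} (h : Rich w) : Rich w.reverse := by
  have hset : {p : List A | p.reverse = p ∧ p <:+: w.reverse} =
      {p : List A | p.reverse = p ∧ p <:+: w} := by
    ext p
    refine and_congr_right fun hp => ?_
    conv_lhs => rw [← hp]
    exact List.reverse_infix
  unfold Rich at h ⊢
  rw [hset, h, List.length_reverse]

theorem Rich.of_cons {A : Type*} {w : List A} {x : A} (h : Rich (x :: w)) : Rich w := by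
  have h' := h.reverse
  rw [List.reverse_cons] at h'
  simpa using h'.of_concat.reverse

/-- The longest palindromic suffix of a rich word occurs only once. -/
theorem Rich.not_infix_of_longest_palindromic_suffix {A : Type*} {w q : List A} {x : A}
    (h : Rich (w ++ [x])) (hq : q.reverse = q) (hqw : q <:+ w ++ [x])
    (hmax : ∀ r : List A, r.reverse = r → r <:+ w ++ [x] → r.length ≤ q.length) :
    ¬ q <:+: w := by
  intro hin
  have hsub := palindromic_infixes_concat_subset hq hqw hmax
  rw [Set.insert_eq_of_mem (show q ∈ {p : List A | p.reverse = p ∧ p <:+: w} from ⟨hq, hin⟩)]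
    at hsub
  have h₁ := Set.ncard_le_ncard hsub (finite_palindromic_infixes w)
  have h₂ := ncard_palindromic_infixes_le w
  unfold Rich at h
  simp only [List.length_append, List.length_singleton] at h
  omega

theorem Rich.concat_of_not_infix {A : Type*} {w q : List A} {x : A} (h : Rich w)
    (hq : q.reverse = q) (hqw : q <:+ w ++ [x]) (hnot : ¬ q <:+: w) : Rich (w ++ [x]) := by
  have hsub : insert q {p : List A | p.reverse = p ∧ p <:+: w} ⊆
      {p : List A | p.reverse = p ∧ p <:+: w ++ [x]} := by
    rintro r (rfl | hr)
    · exact ⟨hq, hqw.isInfix⟩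
    · exact ⟨hr.1, hr.2.trans (List.prefix_append w [x]).isInfix⟩
  have h₁ := Set.ncard_le_ncard hsub (finite_palindromic_infixes _)
  rw [Set.ncard_insert_of_notMem (fun hm => hnot hm.2) (finite_palindromic_infixes w)] at h₁
  have h₂ := ncard_palindromic_infixes_le (w ++ [x])
  unfold Rich at h ⊢
  simp only [List.length_append, List.length_singleton] at h₂ ⊢
  omega

theorem stmt5 {A : Type*} (w p : List A) (x : A)
    (hw : Rich w) (hne : w ≠ [])
    (hpal : p.reverse = p) (hsuf : p <:+ w) (hproper : p ≠ w)
    (hlongest : ∀ q : List A, q.reverse = q → q <:+ w → q ≠ w → q.length ≤ p.length)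
    (hx : (x :: p) <:+ w) :
    Rich (w ++ [x]) := by
  refine hw.concat_of_not_infix (q := x :: (p ++ [x])) (by simp [hpal]) ?_ ?_
  · obtain ⟨s, rfl⟩ := hx
    exact ⟨s, by simp⟩
  rintro ⟨s, t, hst⟩
  obtain ⟨a, v, rfl⟩ := List.exists_cons_of_ne_nil hne
  have hpv : p <:+ v := (List.suffix_cons_iff.1 hsuf).resolve_left hproper
  have hpx : p ++ [x] <:+: v := by
    cases s with
    | nil => exact ⟨[], t, by simpa using (List.cons.inj hst).2⟩
    | cons b s => exact ⟨s ++ [x], t, by simpa using (List.cons.inj hst).2⟩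
  rcases List.eq_nil_or_concat' v with rfl | ⟨u, y, rfl⟩
  · simp at hpx
  refine hw.of_cons.not_infix_of_longest_palindromic_suffix hpal hpv (fun r hr hrv => ?_) ?_
  · refine hlongest r hr (hrv.trans (List.suffix_cons _ _)) fun h => ?_
    have := hrv.length_le
    simp [h] at this
  · rcases List.infix_concat_iff.1 hpx with ⟨s', h⟩ | h
    · rw [← List.append_assoc] at h
      exact ⟨s', [], by simpa using (List.append_inj' h rfl).1⟩
    · exact (List.prefix_append p [x]).isInfix.trans h
end

section
/- For every real constant c > 0 and every integer m > 0, there exists n > m such that φ(n) ≥ (2/9 − c)·n, where φ(n) = max{ω(w) : w rich, |w| = n} and ω(w) is the minimal length of u such that wu is rich and wu can be extended in at least two ways. -/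
/-- `v` can be extended (to a rich word) in at least two ways. -/
def TwoWays {A : Type*} (v : List A) : Prop :=
  ∃ x y : A, x ≠ y ∧ Rich (v ++ [x]) ∧ Rich (v ++ [y])

namespace RichWord

section General

variable {α β : Type*}

theorem finite_palindromes (w : List α) : {p : List α | p.reverse = p ∧ p <:+: w}.Finite := by
  refine (List.finite_toSet w.sublists).subset ?_
  rintro p ⟨-, hp⟩
  exact List.mem_sublists.2 hp.sublist

/-- A palindromic suffix of `w ++ [x]` that is not the longest one already occurs in `w`. -/
theorem infix_of_palindromic_suffix_of_length_lt {w p q : List α} {x : α}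
    (hp : p.reverse = p) (hq : q.reverse = q) (hpw : p <:+ w ++ [x]) (hqw : q <:+ w ++ [x])
    (hlt : p.length < q.length) : p <:+: w := by
  have hpq : p <+: q := by
    have h := List.reverse_prefix.2 (List.suffix_of_suffix_length_le hpw hqw hlt.le)
    rwa [hp, hq] at h
  obtain ⟨r, rfl⟩ := hpq
  obtain ⟨s, hs⟩ := hqw
  rcases List.eq_nil_or_concat' r with rfl | ⟨r', y, rfl⟩
  · simp at hlt
  · refine ⟨s, r', ?_⟩
    have : (s ++ p ++ r') ++ [y] = w ++ [x] := by simpa using hs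
    exact (List.append_inj' this rfl).1

theorem subsingleton_new_palindromes (w : List α) (x : α) :
    {p : List α | p.reverse = p ∧ p <:+ w ++ [x] ∧ ¬ p <:+: w}.Subsingleton := by
  rintro p ⟨hp, hpw, hpn⟩ q ⟨hq, hqw, hqn⟩
  rcases lt_trichotomy p.length q.length with h | h | h
  · exact absurd (infix_of_palindromic_suffix_of_length_lt hp hq hpw hqw h) hpn
  · exact (List.suffix_of_suffix_length_le hpw hqw h.le).eq_of_length h
  · exact absurd (infix_of_palindromic_suffix_of_length_lt hq hp hqw hpw h) hqn

theorem ncard_new_palindromes_le_one (w : List α) (x : α) :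
    {p : List α | p.reverse = p ∧ p <:+ w ++ [x] ∧ ¬ p <:+: w}.ncard ≤ 1 :=
  (Set.ncard_le_one (subsingleton_new_palindromes w x).finite).2
    fun _ ha _ hb => subsingleton_new_palindromes w x ha hb

theorem ncard_palindromes_snoc (w : List α) (x : α) :
    {p : List α | p.reverse = p ∧ p <:+: w ++ [x]}.ncard =
      {p : List α | p.reverse = p ∧ p <:+: w}.ncard +
        {p : List α | p.reverse = p ∧ p <:+ w ++ [x] ∧ ¬ p <:+: w}.ncard := by
  rw [← Set.ncard_union_eq ?_ (finite_palindromes w) (subsingleton_new_palindromes w x).finite]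
  · congr 1
    ext p
    simp only [Set.mem_ofPred_eq, Set.mem_union, List.infix_concat_iff]
    tauto
  · rw [Set.disjoint_left]
    rintro p ⟨-, h⟩ ⟨-, -, h'⟩
    exact h' h

theorem ncard_palindromes_nil : {p : List α | p.reverse = p ∧ p <:+: []}.ncard = 1 := by
  rw [Set.ncard_eq_one]
  refine ⟨[], ?_⟩
  ext p
  simp only [List.infix_nil, Set.mem_ofPred_eq, Set.mem_singleton_iff]
  constructor
  · exact fun h => h.2
  · rintro rfl
    simp

theorem ncard_palindromes_le (w : List α) :
    {p : List α | p.reverse = p ∧ p <:+: w}.ncard ≤ w.length + 1 := by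
  induction w using List.reverseRecOn with
  | nil => rw [ncard_palindromes_nil]; simp
  | append_singleton w x ih =>
    rw [ncard_palindromes_snoc]
    have := ncard_new_palindromes_le_one w x
    simp only [List.length_append, List.length_singleton]
    omega

theorem rich_nil : Rich ([] : List α) := ncard_palindromes_nil

theorem rich_snoc {w : List α} {x : α} :
    Rich (w ++ [x]) ↔ Rich w ∧ ∃ p : List α, p.reverse = p ∧ p <:+ w ++ [x] ∧ ¬ p <:+: w := by
  have hfin := (subsingleton_new_palindromes w x).finite
  have h1 := ncard_new_palindromes_le_one w x
  have h2 := ncard_palindromes_le w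
  have h3 : (∃ p : List α, p.reverse = p ∧ p <:+ w ++ [x] ∧ ¬ p <:+: w) ↔
      0 < {p : List α | p.reverse = p ∧ p <:+ w ++ [x] ∧ ¬ p <:+: w}.ncard := by
    rw [Set.ncard_pos hfin]; rfl
  rw [h3]
  unfold Rich
  rw [ncard_palindromes_snoc, List.length_append, List.length_singleton]
  omega

theorem rich_reverse {w : List α} : Rich w.reverse ↔ Rich w := by
  unfold Rich
  rw [List.length_reverse]
  have : {p : List α | p.reverse = p ∧ p <:+: w.reverse} =
      {p : List α | p.reverse = p ∧ p <:+: w} := by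
    ext p
    simp only [Set.mem_ofPred_eq, and_congr_right_iff]
    intro hp
    conv_lhs => rw [← hp]
    exact List.reverse_infix
  rw [this]

theorem rich_cons {w : List α} {x : α} :
    Rich (x :: w) ↔ Rich w ∧ ∃ p : List α, p.reverse = p ∧ p <+: x :: w ∧ ¬ p <:+: w := by
  rw [← rich_reverse, List.reverse_cons, rich_snoc, rich_reverse]
  refine and_congr_right fun _ => exists_congr fun p => and_congr_right fun hp => ?_
  rw [← List.reverse_cons]
  conv_lhs => rw [← hp]
  rw [List.reverse_suffix, List.reverse_infix, ← List.reverse_suffix]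

theorem rich_of_prefix {u w : List α} (h : Rich w) (hu : u <+: w) : Rich u := by
  obtain ⟨t, rfl⟩ := hu
  induction t using List.reverseRecOn with
  | nil => simpa using h
  | append_singleton t x ih =>
    rw [← List.append_assoc, rich_snoc] at h
    exact ih h.1

theorem rich_of_infix {u w : List α} (h : Rich w) (hu : u <:+: w) : Rich u := by
  obtain ⟨s, t, rfl⟩ := hu
  have h1 : Rich (s ++ u) := rich_of_prefix h ⟨t, rfl⟩
  rw [← rich_reverse, List.reverse_append] at h1
  exact rich_reverse.1 (rich_of_prefix h1 ⟨_, rfl⟩)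

theorem rich_map {f : α → β} (hf : Function.Injective f) {w : List α} :
    Rich (w.map f) ↔ Rich w := by
  unfold Rich
  have : {p : List β | p.reverse = p ∧ p <:+: w.map f} =
      List.map f '' {p : List α | p.reverse = p ∧ p <:+: w} := by
    ext p
    simp only [Set.mem_ofPred_eq, Set.mem_image]
    constructor
    · rintro ⟨hp, hpw⟩
      obtain ⟨q, hq, rfl⟩ := List.infix_map_iff.1 hpw
      refine ⟨q, ⟨List.map_injective_iff.2 hf ?_, hq⟩, rfl⟩
      rw [List.map_reverse, hp]
    · rintro ⟨q, ⟨hq, hqw⟩, rfl⟩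
      exact ⟨by rw [← List.map_reverse, hq], hqw.map f⟩
  rw [this, Set.ncard_image_of_injective _ (List.map_injective_iff.2 hf), List.length_map]

end General

section Morphism

variable {α : Type*} [DecidableEq α]

/-- The morphism fixing `a` and sending every other letter `x` to `xa`. -/
def spread (a : α) (w : List α) : List α :=
  w.flatMap fun x => if x = a then [a] else [x, a]

/-- The letters that follow an occurrence of `a`; a left inverse of `w ↦ a :: spread a w`. -/
def decode (a : α) : List α → List α
  | [] => []
  | [_] => []
  | x :: y :: l => if x = a then y :: decode a (y :: l) else decode a (y :: l)

@[simp] theorem spread_nil (a : α) : spread a [] = [] := rfl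

theorem spread_cons_self (a : α) (w : List α) : spread a (a :: w) = a :: spread a w := by
  simp [spread]

theorem spread_cons_of_ne {a x : α} (h : x ≠ a) (w : List α) :
    spread a (x :: w) = x :: a :: spread a w := by
  simp [spread, h]

theorem spread_append (a : α) (u v : List α) : spread a (u ++ v) = spread a u ++ spread a v := by
  simp [spread]

theorem spread_reverse (a : α) (w : List α) :
    a :: spread a w.reverse = (a :: spread a w).reverse := by
  induction w with
  | nil => rfl
  | cons x w ih =>
    rw [List.reverse_cons, spread_append, ← List.cons_append, ih]
    by_cases h : x = a
    · subst h
      simp [spread_cons_self]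
    · simp [spread_cons_of_ne h]

theorem decode_cons_spread (a : α) (w : List α) : decode a (a :: spread a w) = w := by
  induction w with
  | nil => rfl
  | cons x w ih =>
    by_cases h : x = a
    · subst h
      simp [spread_cons_self, decode, ih]
    · simp [spread_cons_of_ne h, decode, h, ih]

theorem cons_spread_injective (a : α) : Function.Injective fun w => a :: spread a w :=
  Function.LeftInverse.injective (decode_cons_spread a)

theorem decode_suffix_decode_append (a : α) (s l : List α) : decode a l <:+ decode a (s ++ l) := by
  induction s with
  | nil => exact List.suffix_rfl
  | cons x s ih =>
    refine ih.trans ?_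
    rw [List.cons_append]
    rcases s ++ l with _ | ⟨y, t⟩
    · exact List.nil_suffix
    · rw [decode]
      split_ifs
      · exact List.suffix_cons _ _
      · exact List.suffix_rfl

theorem decode_prefix_decode_append (a : α) (l t : List α) : decode a l <+: decode a (l ++ t) := by
  induction l with
  | nil => exact List.nil_prefix
  | cons x l ih =>
    rcases l with _ | ⟨y, l⟩
    · simp [decode]
    · simp only [List.cons_append, decode] at ih ⊢
      split_ifs
      · exact (List.prefix_cons_inj y).2 ih
      · exact ih

theorem cons_spread_infix_iff {a : α} {p w : List α} :
    a :: spread a p <:+: a :: spread a w ↔ p <:+: w := by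
  constructor
  · rintro ⟨s, t, h⟩
    have h1 := (decode_prefix_decode_append a (a :: spread a p) t).isInfix.trans
      (decode_suffix_decode_append a s _).isInfix
    rwa [← List.append_assoc, h, decode_cons_spread, decode_cons_spread] at h1
  · rintro ⟨s, t, rfl⟩
    have h : a :: spread a (s ++ p ++ t) = (a :: spread a s) ++ spread a p ++ spread a t := by
      simp [spread_append]
    rw [h]
    refine List.IsInfix.trans ?_ (List.prefix_append _ _).isInfix
    rcases List.eq_nil_or_concat' (a :: spread a s) with h0 | ⟨r, y, hr⟩
    · simp at h0
    · have hy : y = a := by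
        have h1 := spread_reverse a s
        rw [hr] at h1
        simp only [List.reverse_append, List.reverse_singleton, List.singleton_append,
          List.cons.injEq] at h1
        exact h1.1.symm
      subst hy
      exact ⟨r, [], by rw [hr]; simp⟩

theorem cons_spread_reverse_eq_iff {a : α} {p : List α} :
    (a :: spread a p).reverse = a :: spread a p ↔ p.reverse = p := by
  rw [← spread_reverse]
  exact (cons_spread_injective a).eq_iff

theorem cons_spread_suffix {a : α} {p w : List α} (h : p <:+ w) :
    a :: spread a p <:+ a :: spread a w := by
  obtain ⟨s, rfl⟩ := h
  have h1 := List.reverse_prefix (l₁ := a :: spread a p) (l₂ := a :: spread a (s ++ p))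
  rw [← h1, ← spread_reverse, ← spread_reverse, List.reverse_append, spread_append]
  exact ⟨spread a s.reverse, by simp⟩

theorem exists_eq_of_suffix_cons_spread {a : α} {q w : List α}
    (h : a :: q <:+ a :: spread a w) : ∃ p, p <:+ w ∧ a :: q = a :: spread a p := by
  induction w with
  | nil =>
    rw [spread_nil, List.suffix_cons_iff] at h
    rcases h with h | h
    · exact ⟨[], List.suffix_rfl, h⟩
    · simp at h
  | cons x w ih =>
    rcases List.suffix_cons_iff.1 h with h | h
    · exact ⟨x :: w, List.suffix_rfl, h⟩
    have hw : a :: q <:+ a :: spread a w := by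
      by_cases hx : x = a
      · subst hx
        rwa [spread_cons_self] at h
      · rw [spread_cons_of_ne hx] at h
        rcases List.suffix_cons_iff.1 h with h | h
        · exact absurd (List.cons.inj h).1.symm hx
        · exact h
    obtain ⟨p, hp, he⟩ := ih hw
    exact ⟨p, hp.trans (List.suffix_cons _ _), he⟩

theorem not_pair_infix_cons_spread {a x y : α} (hx : x ≠ a) (hy : y ≠ a) (w : List α) :
    ¬ [x, y] <:+: a :: spread a w := by
  induction w with
  | nil => simp [List.infix_cons_iff, hx]
  | cons z w ih =>
    by_cases hz : z = a
    · subst hz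
      rw [spread_cons_self, List.infix_cons_iff]
      simp [hx, ih]
    · rw [spread_cons_of_ne hz, List.infix_cons_iff, List.infix_cons_iff]
      simp [hx, hy, ih]

theorem spread_singleton_self (a : α) : spread a [a] = [a] := by
  simp [spread]

theorem spread_singleton_of_ne {a x : α} (h : x ≠ a) : spread a [x] = [x, a] := by
  simp [spread, h]

theorem exists_cons_spread_eq_concat (a : α) (w : List α) :
    ∃ r, a :: spread a w = r ++ [a] := by
  have h := congrArg List.reverse (spread_reverse a w)
  rw [List.reverse_reverse, List.reverse_cons] at h
  exact ⟨_, h.symm⟩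

theorem eq_of_append_cons_eq_cons_spread {a x y : α} (hx : x ≠ a) {s t w : List α}
    (h : s ++ [y] ++ x :: t = a :: spread a w) : y = a := by
  by_contra hy
  exact not_pair_infix_cons_spread hy hx w ⟨s, t, by simpa using h⟩

/-- A palindromic factor that starts with a letter other than `a` is surrounded by `a`. -/
theorem surrounded_infix_cons_spread {a x : α} (hx : x ≠ a) {q w : List α}
    (hq : (x :: q).reverse = x :: q) (hw : x :: q <:+: a :: spread a w) :
    a :: (x :: q ++ [a]) <:+: a :: spread a w := by
  obtain ⟨s, t, h⟩ := hw
  rcases List.eq_nil_or_concat' s with rfl | ⟨s, y, rfl⟩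
  · exact absurd (List.cons.inj h).1 hx
  have hya : y = a := eq_of_append_cons_eq_cons_spread hx (t := q ++ t) (by simpa using h)
  rcases t with _ | ⟨z, t⟩
  · obtain ⟨r, hr⟩ := exists_cons_spread_eq_concat a w
    rw [hr, ← hq, List.append_nil, List.reverse_cons, ← List.append_assoc] at h
    exact absurd (List.cons.inj (List.append_inj' h rfl).2).1 hx
  have hza : z = a := by
    have h' := congrArg List.reverse h
    rw [← spread_reverse, List.reverse_append, List.reverse_append, hq] at h'
    exact eq_of_append_cons_eq_cons_spread hx (s := t.reverse)
      (t := q ++ (s ++ [y]).reverse) (by simpa using h')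
  subst hya hza
  exact ⟨s, t, by simpa using h⟩

theorem rich_cons_spread (a : α) {w : List α} (hw : Rich w) : Rich (a :: spread a w) := by
  induction w using List.reverseRecOn with
  | nil => exact rich_snoc.2 ⟨rich_nil, [a], rfl, List.suffix_rfl, by simp⟩
  | append_singleton w x ih =>
    obtain ⟨hw', p, hp, hpw, hpn⟩ := rich_snoc.1 hw
    have hP := cons_spread_reverse_eq_iff (a := a).2 hp
    have hPs := cons_spread_suffix (a := a) hpw
    have hPn : ¬ a :: spread a p <:+: a :: spread a w := fun h => hpn (cons_spread_infix_iff.1 h)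
    by_cases hx : x = a
    · subst hx
      rw [spread_append, spread_singleton_self, ← List.cons_append] at hPs ⊢
      exact rich_snoc.2 ⟨ih hw', _, hP, hPs, hPn⟩
    · have he : a :: spread a (w ++ [x]) = a :: spread a w ++ [x] ++ [a] := by
        simp [spread_append, spread_singleton_of_ne hx]
      rw [he] at hPs ⊢
      rcases List.eq_nil_or_concat' p with rfl | ⟨p, y, rfl⟩
      · exact absurd List.nil_infix hpn
      obtain rfl : y = x := by
        obtain ⟨s, hs⟩ := hpw
        rw [← List.append_assoc] at hs
        exact (List.cons.inj (List.append_inj' hs rfl).2).1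
      have hpe : a :: spread a (p ++ [y]) = a :: (spread a p ++ [y]) ++ [a] := by
        simp [spread_append, spread_singleton_of_ne hx]
      rw [hpe] at hP hPs hPn
      have hR : (spread a p ++ [y]).reverse = spread a p ++ [y] :=
        List.append_cancel_right (bs := [a]) (by simpa using hP)
      have hRs : a :: (spread a p ++ [y]) <:+ a :: spread a w ++ [y] := by
        obtain ⟨s, hs⟩ := hPs
        exact ⟨s, (List.append_inj' (by simpa using hs) (rfl : [a].length = [a].length)).1⟩
      refine rich_snoc.2 ⟨rich_snoc.2 ⟨ih hw', _, hR, (List.suffix_cons _ _).trans hRs, ?_⟩,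
        _, hP, hPs, ?_⟩
      · intro h
        have hc : spread a p ++ [y] = y :: (spread a p).reverse := by
          rw [← hR]; simp
        rw [hc] at h hR hPn
        exact hPn (surrounded_infix_cons_spread hx hR h)
      · rw [List.infix_concat_iff]
        rintro (⟨s, hs⟩ | h)
        · rw [← List.append_assoc] at hs
          exact hx (List.cons.inj (List.append_inj' hs rfl).2).1.symm
        · exact hPn h

theorem rich_snoc_of_rich_cons_spread_snoc {a x : α} {w : List α} (hw : Rich w)
    (h : Rich (a :: spread a w ++ [x])) : Rich (w ++ [x]) := by
  obtain ⟨-, q, hq, hqs, hqn⟩ := rich_snoc.1 h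
  by_contra hc
  have key : ∀ p, p.reverse = p → p <:+ w ++ [x] → p <:+: w := by
    intro p hp hpw
    by_contra hpn
    exact hc (rich_snoc.2 ⟨hw, p, hp, hpw, hpn⟩)
  rcases List.eq_nil_or_concat' q with rfl | ⟨q', y, rfl⟩
  · exact hqn List.nil_infix
  obtain ⟨s, hs⟩ := hqs
  obtain rfl : y = x := by
    rw [← List.append_assoc] at hs
    exact (List.cons.inj (List.append_inj' hs rfl).2).1
  have hqc : q' ++ [y] = y :: q'.reverse := by rw [← hq]; simp
  rw [hqc] at hq hqn hs
  by_cases hy : y = a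
  · subst hy
    have he : y :: spread y w ++ [y] = y :: spread y (w ++ [y]) := by
      simp [spread_append, spread_singleton_self]
    rw [he] at hs
    obtain ⟨p, hp, hpe⟩ := exists_eq_of_suffix_cons_spread ⟨s, hs⟩
    rw [hpe] at hq hqn
    exact hqn (cons_spread_infix_iff.2 (key p (cons_spread_reverse_eq_iff.1 hq) hp))
  · have he : a :: spread a w ++ [y] ++ [a] = a :: spread a (w ++ [y]) := by
      simp [spread_append, spread_singleton_of_ne hy]
    rcases List.eq_nil_or_concat' s with rfl | ⟨s, z, rfl⟩
    · exact hy (List.cons.inj hs).1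
    rw [← hs] at he
    obtain rfl : z = a :=
      eq_of_append_cons_eq_cons_spread hy (t := q'.reverse ++ [a]) (by simpa using he)
    have hsuf : z :: (y :: q'.reverse ++ [z]) <:+ z :: spread z (w ++ [y]) :=
      ⟨s, by rw [← he]; simp⟩
    obtain ⟨p, hp, hpe⟩ := exists_eq_of_suffix_cons_spread hsuf
    have hP : (z :: spread z p).reverse = z :: spread z p := by
      rw [← hpe]
      simpa using congrArg (fun l => z :: l ++ [z]) hq
    have hin := cons_spread_infix_iff (a := z).2 (key p (cons_spread_reverse_eq_iff.1 hP) hp)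
    rw [← hpe] at hin
    exact hqn (List.IsInfix.trans ⟨[z], [z], by simp⟩ hin)

end Morphism

section Forced

/-- `u` is the only candidate for a rich extension of `w`, and no proper prefix of `w ++ u`
extending `w` is a palindrome. -/
def Forced : List Bool → List Bool → Prop
  | _, [] => True
  | w, y :: u => w.reverse ≠ w ∧ ¬ Rich (w ++ [!y]) ∧ Forced (w ++ [y]) u

/-- A computable form of richness, by recursion on the first letter. -/
def RichRec : List Bool → Prop
  | [] => True
  | x :: w => RichRec w ∧ ∃ p ∈ (x :: w).inits, p.reverse = p ∧ ¬ p <:+: w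

instance decidableRichRec : (w : List Bool) → Decidable (RichRec w)
  | [] => isTrue trivial
  | x :: w =>
    have := decidableRichRec w
    inferInstanceAs (Decidable (RichRec w ∧ ∃ p ∈ (x :: w).inits, p.reverse = p ∧ ¬ p <:+: w))

theorem richRec_iff (w : List Bool) : RichRec w ↔ Rich w := by
  induction w with
  | nil => exact iff_of_true trivial rich_nil
  | cons x w ih =>
    rw [RichRec, ih, rich_cons]
    refine and_congr_right fun _ => exists_congr fun p => ?_
    rw [List.mem_inits]
    tauto

instance decidableRich (w : List Bool) : Decidable (Rich w) :=
  decidable_of_iff _ (richRec_iff w)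

instance decidableForced : (w u : List Bool) → Decidable (Forced w u)
  | _, [] => isTrue trivial
  | w, y :: u =>
    have := decidableForced (w ++ [y]) u
    inferInstanceAs (Decidable (w.reverse ≠ w ∧ ¬ Rich (w ++ [!y]) ∧ Forced (w ++ [y]) u))

theorem reverse_ne_of_not_infix {α : Type*} {a b : α} (hab : b ≠ a) {t : List α}
    (h : ¬ [b, b] <:+: a :: t) : (b :: b :: a :: t).reverse ≠ b :: b :: a :: t := by
  intro hr
  have hs : [b, b] <:+ b :: b :: a :: t := by
    rw [← hr]
    exact ⟨t.reverse ++ [a], by simp⟩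
  rw [List.suffix_cons_iff, List.suffix_cons_iff] at hs
  rcases hs with hs | hs | hs
  · simp at hs
  · simp [hab] at hs
  · exact h hs.isInfix

theorem not_rich_cons_spread_append_pair {α : Type*} [DecidableEq α] {a b : α} (hab : b ≠ a)
    {w : List α} (hw : w.reverse ≠ w) :
    ¬ Rich (b :: b :: a :: spread a w ++ [b] ++ [b]) := by
  rw [rich_snoc]
  rintro ⟨-, p, hp, hps, hpn⟩
  have hbb : [b, b] <:+: b :: b :: a :: spread a w ++ [b] := ⟨[], a :: spread a w ++ [b], by simp⟩
  have hbs : [b, b] <:+ b :: b :: a :: spread a w ++ [b] ++ [b] :=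
    ⟨b :: b :: a :: spread a w, by simp⟩
  rcases le_total p.length 2 with hlen | hlen
  · exact hpn ((List.suffix_of_suffix_length_le hps hbs hlen).isInfix.trans hbb)
  have hpb : [b, b] <+: p := by
    have h := List.reverse_prefix.2 (List.suffix_of_suffix_length_le hbs hps hlen)
    rwa [hp] at h
  rw [show b :: b :: a :: spread a w ++ [b] ++ [b] = b :: b :: (a :: spread a w ++ [b, b]) by simp,
    List.suffix_cons_iff, List.suffix_cons_iff] at hps
  rcases hps with rfl | rfl | hps
  · refine hw (cons_spread_reverse_eq_iff (a := a).1 ?_)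
    refine List.append_cancel_right (bs := [b, b]) ?_
    simpa using hp
  · simp [hab] at hpb
  · obtain ⟨r, rfl⟩ : ∃ r, p = r ++ [b, b] := by
      obtain ⟨s, rfl⟩ := hpb
      exact ⟨s.reverse, by rw [← hp]; simp⟩
    have hr : r <:+ a :: spread a w := by
      obtain ⟨s, hs⟩ := hps
      rw [← List.append_assoc] at hs
      exact ⟨s, (List.append_inj' hs rfl).1⟩
    rcases r with _ | ⟨c, _ | ⟨d, r⟩⟩
    · exact hpn (by simpa using hbb)
    · obtain rfl : b = c := by simpa using hpb
      obtain ⟨s, hs⟩ := hr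
      obtain ⟨t, ht⟩ := exists_cons_spread_eq_concat a w
      rw [ht] at hs
      exact hab (List.cons.inj (List.append_inj' hs rfl).2).1
    · obtain ⟨rfl, rfl⟩ : b = c ∧ b = d := by simpa using hpb
      exact not_pair_infix_cons_spread hab hab w (List.IsInfix.trans ⟨[], r, by simp⟩ hr.isInfix)

theorem rich_cons_cons_cons_cons_spread {α : Type*} [DecidableEq α] {a b : α} (hab : b ≠ a)
    {w : List α} (h : Rich (b :: w)) : Rich (a :: b :: b :: a :: spread a w) := by
  have h1 := rich_cons_spread a h
  rw [spread_cons_of_ne hab] at h1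
  have h2 : Rich (b :: a :: spread a w) := rich_of_infix h1 (List.suffix_cons _ _).isInfix
  have hn : ¬ [b, b] <:+: b :: a :: spread a w := by
    rw [List.infix_cons_iff]
    simp [hab, not_pair_infix_cons_spread hab hab w]
  refine rich_cons.2 ⟨rich_cons.2 ⟨h2, [b, b], rfl, by simp, hn⟩, [a, b, b, a], rfl, by simp, ?_⟩
  rw [List.infix_cons_iff]
  rintro (h | h)
  · simp [hab.symm] at h
  · exact hn (List.IsInfix.trans ⟨[a], [a], rfl⟩ h)

theorem Forced.spread {a : Bool} {w u : List Bool} (hr : Rich (w ++ u)) (h : Forced w u) :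
    Forced ((!a) :: (!a) :: a :: spread a w) (spread a u) := by
  induction u generalizing w with
  | nil => trivial
  | cons y u ih =>
    obtain ⟨hw, hy, hu⟩ := h
    have hab : (!a) ≠ a := by simp
    have hrw : Rich w := rich_of_prefix hr (List.prefix_append _ _)
    have ih' := ih (w := w ++ [y]) (by simpa using hr) hu
    have hnp := reverse_ne_of_not_infix hab (not_pair_infix_cons_spread hab hab w)
    have hny : ¬ Rich ((!a) :: (!a) :: a :: RichWord.spread a w ++ [!y]) := fun h =>
      hy (rich_snoc_of_rich_cons_spread_snoc (a := a) hrw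
        (rich_of_infix h ⟨[!a, !a], [], by simp⟩))
    by_cases hya : y = a
    · subst hya
      rw [spread_cons_self]
      refine ⟨hnp, hny, ?_⟩
      simpa [spread_append, spread_singleton_self] using ih'
    · rw [spread_cons_of_ne hya]
      rw [spread_append, spread_singleton_of_ne hya] at ih'
      obtain rfl : y = !a := Bool.eq_not.2 hya
      refine ⟨hnp, hny, ?_, not_rich_cons_spread_append_pair hab hw, by simpa using ih'⟩
      refine reverse_ne_of_not_infix hab fun h => ?_
      refine not_pair_infix_cons_spread hab hab (w ++ [!a]) (h.trans ?_)
      exact ⟨[], [a], by simp [spread_append, spread_singleton_of_ne hab]⟩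

/-- The data carried along the iteration; the two inequalities bound the letter counts of `u`
from below by those of `w`. -/
structure ForcedPair (a : Bool) (w u : List Bool) : Prop where
  rich : Rich ((!a) :: (w ++ u))
  forced : Forced w u
  count_self : 2 * (w.count a + 1) ≤ 9 * u.count a
  count_not : 2 * (w.count (!a) + 3) ≤ 9 * u.count (!a)

theorem count_self_spread (a : Bool) (w : List Bool) : (spread a w).count a = w.length := by
  induction w with
  | nil => rfl
  | cons x w ih =>
    by_cases h : x = a
    · subst h
      simp [spread_cons_self, ih]
    · simp [spread_cons_of_ne h, ih, h]

theorem count_not_spread (a : Bool) (w : List Bool) :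
    (spread a w).count (!a) = w.count (!a) := by
  induction w with
  | nil => rfl
  | cons x w ih =>
    by_cases h : x = a
    · subst h
      simp [spread_cons_self, ih]
    · simp [spread_cons_of_ne h, ih, List.count_cons]

theorem ForcedPair.spread {a : Bool} {w u : List Bool} (h : ForcedPair a w u) :
    ForcedPair (!a) ((!a) :: (!a) :: a :: RichWord.spread a w) (RichWord.spread a u) where
  rich := by
    have := rich_cons_cons_cons_cons_spread (by simp : (!a) ≠ a) h.rich
    simpa [spread_append] using this
  forced := h.forced.spread (rich_of_infix h.rich (List.suffix_cons _ _).isInfix)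
  count_self := by
    have := h.count_not
    simp [count_not_spread]
    omega
  count_not := by
    have h1 := h.count_not
    have h2 := h.count_self
    have h3 := List.count_not_add_count w a
    have h4 := List.count_not_add_count u a
    simp [count_self_spread]
    omega

theorem exists_forcedPair (n : ℕ) : ∃ a w u, ForcedPair a w u ∧ n ≤ w.length := by
  induction n with
  | zero =>
    refine ⟨true, [true, false, true, false, true, true, true, false, false, false, true, true,
      false, false, false, true, true, false, false, true, true, false, false, false, false, true],
      [true, false, false, true, true, false, false], ⟨?_, ?_, ?_, ?_⟩, Nat.zero_le _⟩
    · decide +kernel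
    · decide +kernel
    · decide
    · decide
  | succ n ih =>
    obtain ⟨a, w, u, h, hn⟩ := ih
    refine ⟨_, _, _, h.spread, ?_⟩
    have h1 := List.count_le_length (a := a) (l := RichWord.spread a w)
    rw [count_self_spread] at h1
    simp only [List.length_cons]
    omega

theorem ForcedPair.length_le {a : Bool} {w u : List Bool} (h : ForcedPair a w u) :
    2 * w.length ≤ 9 * u.length := by
  have h1 := h.count_not
  have h2 := h.count_self
  have h3 := List.count_not_add_count w a
  have h4 := List.count_not_add_count u a
  omega

end Forced

section Alphabet

variable {A : Type*}

theorem rich_append_of_nodup {l v : List A} (hl : l.Nodup) (hd : l.Disjoint v) (hv : Rich v) :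
    Rich (l ++ v) := by
  induction l with
  | nil => exact hv
  | cons z l ih =>
    rw [List.nodup_cons] at hl
    rw [List.disjoint_cons_left] at hd
    refine rich_cons.2 ⟨ih hl.2 hd.2, [z], rfl, by simp, ?_⟩
    intro h
    have hz := h.subset (List.mem_singleton_self z)
    simp [hl.1, hd.1] at hz

theorem not_rich_append_snoc {l v : List A} {z : A} (hd : l.Disjoint v)
    (hz : z ∈ l) (hv : v.reverse ≠ v) : ¬ Rich (l ++ v ++ [z]) := by
  rw [rich_snoc]
  rintro ⟨-, q, hq, ⟨s, hs⟩, hqn⟩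
  rcases List.eq_nil_or_concat' q with rfl | ⟨q, y, rfl⟩
  · exact hqn List.nil_infix
  rw [← List.append_assoc] at hs
  obtain ⟨he, hy⟩ := List.append_inj' hs rfl
  obtain rfl := (List.cons.inj hy).1
  rcases q with _ | ⟨x, q⟩
  · refine hqn ?_
    obtain ⟨r, t, rfl⟩ := List.append_of_mem hz
    exact ⟨r, t ++ v, by simp⟩
  obtain ⟨rfl, hq'⟩ : x = y ∧ q.reverse = q := by
    have : y :: (q.reverse ++ [x]) = x :: (q ++ [y]) := by simpa using hq
    obtain ⟨h1, h2⟩ := List.cons.inj this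
    exact ⟨h1.symm, (List.append_inj' h2 rfl).1⟩
  rcases List.append_eq_append_iff.1 he with ⟨r, rfl, hr⟩ | ⟨r, rfl, rfl⟩
  · rcases r with _ | ⟨c, _ | ⟨d, r⟩⟩
    · exact hd hz (by rw [show v = _ from hr.symm]; exact List.mem_cons_self)
    · obtain rfl : q = v := (List.cons.inj hr).2
      exact hv hq'
    · obtain rfl : q = d :: r ++ v := (List.cons.inj hr).2
      rcases List.eq_nil_or_concat' v with rfl | ⟨v, e, rfl⟩
      · exact hv rfl
      · have he : e = d := by
          rw [← List.append_assoc, List.reverse_append] at hq'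
          exact (List.cons.inj hq').1
        exact hd (a := d) (by simp) (by simp [he])
  · exact hd hz (by simp)

theorem disjoint_map_of_forall_notMem_range {β : Type*} {f : β → A} {l : List A}
    (hl : ∀ x ∈ l, x ∉ Set.range f) (w : List β) : l.Disjoint (w.map f) := by
  intro x hx hxw
  obtain ⟨b, -, rfl⟩ := List.mem_map.1 hxw
  exact hl _ hx ⟨b, rfl⟩

/-- Prepending the remaining letters of the alphabet transfers `Forced` from `Bool` to `A`. -/
theorem Forced.length_le {f : Bool → A} (hf : Function.Injective f) {l : List A}
    (hl : ∀ x, x ∈ l ↔ x ∉ Set.range f) {w u : List Bool} (h : Forced w u) {U : List A}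
    (hr : Rich (l ++ w.map f ++ U)) (ht : TwoWays (l ++ w.map f ++ U)) :
    u.length ≤ U.length := by
  induction u generalizing w U with
  | nil => exact Nat.zero_le _
  | cons y u ih =>
    obtain ⟨hw, hy, hu⟩ := h
    have hd := disjoint_map_of_forall_notMem_range (fun x hx => (hl x).1 hx) w
    have key : ∀ x, Rich (l ++ w.map f ++ [x]) → x = f y := by
      intro x hx
      by_cases hxl : x ∈ l
      · refine absurd hx (not_rich_append_snoc hd hxl fun h => hw ?_)
        rw [← List.map_reverse] at h
        exact List.map_injective_iff.2 hf h
      · rw [hl, not_not] at hxl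
        obtain ⟨b, rfl⟩ := hxl
        by_contra hb
        obtain rfl : b = !y := by
          rw [Bool.eq_not]
          exact fun h => hb (h ▸ rfl)
        exact hy ((rich_map hf).1 (rich_of_infix hx ⟨l, [], by simp⟩))
    rcases U with _ | ⟨x, U⟩
    · obtain ⟨x, x', hne, hx, hx'⟩ := ht
      rw [List.append_nil] at hx hx'
      exact absurd ((key x hx).trans (key x' hx').symm) hne
    · obtain rfl : x = f y := key x (rich_of_prefix hr ⟨U, by simp⟩)
      have := ih hu (U := U) (by simpa using hr) (by simpa using ht)
      simpa using this

end Alphabet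

end RichWord

open RichWord

theorem stmt19 {A : Type*} [Fintype A] [Nontrivial A]
    (c : ℝ) (hc : 0 < c) (m : ℕ) (hm : 0 < m) :
    ∃ n : ℕ, m < n ∧ ∃ w : List A, Rich w ∧ w.length = n ∧
      ∀ u : List A, Rich (w ++ u) → TwoWays (w ++ u) →
        (2 / 9 - c) * (n : ℝ) ≤ (u.length : ℝ) := by
  classical
  obtain ⟨x, y, hxy⟩ := exists_pair_ne A
  let f : Bool → A := fun b => if b then x else y
  have hf : Function.Injective f := by
    intro a b h
    cases a <;> cases b <;> simp_all [f, eq_comm]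
  let l : List A := (Finset.univ.filter fun z => z ∉ Set.range f).toList
  have hl : ∀ z, z ∈ l ↔ z ∉ Set.range f := by
    intro z
    simp only [l, Finset.mem_toList, Finset.mem_filter, Finset.mem_univ, true_and]
  obtain ⟨N, hN⟩ := exists_nat_gt ((l.length : ℝ) / c)
  obtain ⟨a, w, u, h, hw⟩ := exists_forcedPair (N + m + 1)
  have hd := disjoint_map_of_forall_notMem_range (fun z hz => (hl z).1 hz) w
  refine ⟨(l ++ w.map f).length, ?_, l ++ w.map f, ?_, rfl, fun U hr ht => ?_⟩
  · simp only [List.length_append, List.length_map]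
    omega
  · refine rich_append_of_nodup (Finset.nodup_toList _) hd ((rich_map hf).2 ?_)
    exact rich_of_infix h.rich ⟨[!a], u, by simp⟩
  · have h1 : (u.length : ℝ) ≤ U.length := by exact_mod_cast h.forced.length_le hf hl hr ht
    have h2 : 2 * (w.length : ℝ) ≤ 9 * u.length := by exact_mod_cast h.length_le
    have h3 : (N : ℝ) ≤ w.length := by exact_mod_cast (by omega : N ≤ w.length)
    have h4 : (l.length : ℝ) ≤ c * w.length := by
      rw [div_lt_iff₀ hc] at hN
      nlinarith
    simp only [List.length_append, List.length_map, Nat.cast_add]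
    have h5 : 0 ≤ (l.length : ℝ) := Nat.cast_nonneg _
    nlinarith [mul_nonneg hc.le h5]
end
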